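/- There exists an absolute constant C > 0 such that for every real ε, every positive integer N (h = 1/N), every vector (ψ₀,…,ψ_{N−1}) ∈ ℂ^N with associated step function ψ_h = Σ_{j=0}^{N−1} ψ_j χ_{j+ε}, and every 1-periodic function u ∈ C³(ℝ, ℂ), the corrected midpoint quadrature satisfies | Σ_{j=0}^{N−1} ψ_j ( h u(t_{j+ε}) + (h³/24) u″(t_{j+ε}) − ∫_{t_{j+ε}−h/2}^{t_{j+ε}+h/2} u(t) dt ) | ≤ C h³ ‖ψ_h‖₀ ‖u‖₃. -/

import Mathlib

noncomputable section

/-- Smooth kernel data, 1-periodic in each variable. -/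
def SPK (A : ℝ → ℝ → ℂ) : Prop :=
  ContDiff ℝ (⊤ : ℕ∞) (fun p : ℝ × ℝ => A p.1 p.2) ∧
    (∀ s t, A (s + 1) t = A s t) ∧ (∀ s t, A s (t + 1) = A s t)

/-- Logarithmic kernel `V(s,t) = (i/(2π)) A(s,t) log(sin²(π(s−t))) + K(s,t)`. -/
def logKer (A K : ℝ → ℝ → ℂ) (s t : ℝ) : ℂ :=
  Complex.I / (2 * Real.pi) * A s t * (Real.log (Real.sin (Real.pi * (s - t)) ^ 2) : ℂ) + K s t

/-- Grid point `s_{j+ε} = (j − 1/2 + ε)h`. -/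
def sg (h ε : ℝ) (j : ℤ) : ℝ := ((j : ℝ) - 1 / 2 + ε) * h

/-- Grid point `t_{j+ε} = (j + ε)h`. -/
def tg (h ε : ℝ) (j : ℤ) : ℝ := ((j : ℝ) + ε) * h

/-- Integral operator with kernel `V`. -/
def Vop (V : ℝ → ℝ → ℂ) (φ : ℝ → ℂ) (s : ℝ) : ℂ := ∫ t in (0:ℝ)..1, V s t * φ t

/-- Hypersingular operator `W = −D V₁ D + V₂`. -/
def Wop (V1 V2 : ℝ → ℝ → ℂ) (φ : ℝ → ℂ) (s : ℝ) : ℂ :=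
  -deriv (Vop V1 (deriv φ)) s + Vop V2 φ s

/-- Nyström matrix entries `W^ε_{ij}`. -/
def Wmat (V1 V2 : ℝ → ℝ → ℂ) (h ε : ℝ) (i j : ℤ) : ℂ :=
  V1 (sg h ε (i + 1)) (sg h 0 (j + 1)) - V1 (sg h ε i) (sg h 0 (j + 1))
    - V1 (sg h ε (i + 1)) (sg h 0 j) + V1 (sg h ε i) (sg h 0 j)
    + (h : ℂ) ^ 2 * V2 (tg h ε i) (tg h 0 j)

/-- Fourier coefficient of a 1-periodic function. -/
def fc (u : ℝ → ℂ) (m : ℤ) : ℂ :=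
  ∫ t in (0:ℝ)..1, u t * Complex.exp (-(2 * Real.pi * Complex.I * (m : ℂ) * (t : ℂ)))

/-- Periodic Sobolev norm of order `r`. -/
def sobNorm (r : ℝ) (u : ℝ → ℂ) : ℝ :=
  Real.sqrt (‖fc u 0‖ ^ 2 +
    ∑' m : ℤ, if m = 0 then 0 else |(m : ℝ)| ^ (2 * r) * ‖fc u m‖ ^ 2)

/-- 1-periodic step function on the ε-shifted grid with coefficients `v`. -/
def stepf (N : ℕ) (ε : ℝ) (v : ZMod N → ℂ) (s : ℝ) : ℂ :=
  v ((⌊s * N + 1 / 2 - ε⌋ : ℤ) : ZMod N)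

/-- Midpoint quadrature error matrix entries `E^ε_{ij}`. -/
def Emat (V2 : ℝ → ℝ → ℂ) (h ε : ℝ) (i j : ℤ) : ℂ :=
  (∫ s in (sg h ε i)..(sg h ε (i + 1)), ∫ t in (sg h 0 j)..(sg h 0 (j + 1)), V2 s t)
    - (h : ℂ) ^ 2 * V2 (tg h ε i) (tg h 0 j)

/-- Spectral (ℓ²-operator) norm of a complex `N×N` matrix. -/
def specNorm {N : ℕ} (M : Matrix (Fin N) (Fin N) ℂ) : ℝ :=
  ‖LinearMap.toContinuousLinearMap (Matrix.toEuclideanLin M)‖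

/-- The function `C̄₁(t) = −(1/(2πi)) log(4 sin²(πt))`. -/
def Cbar1 (t : ℝ) : ℂ :=
  -(1 / (2 * Real.pi * Complex.I)) * (Real.log (4 * Real.sin (Real.pi * t) ^ 2) : ℂ)

end

open MeasureTheory intervalIntegral
open scoped Nat

/-!
On an interval of length `h` centred at `c`, the second-order Taylor polynomial of `u` at `c` has
integral `h u(c) + (h³/24) u″(c)`, so the quadrature error is the integral of the Taylor remainder,
at most `(h³/8) ∫ |u‴|` over that interval. Cauchy–Schwarz, on each interval and then over `j`,
bounds the quadrature sum by `(h³/8) ‖ψ_h‖₀ ‖u‴‖₀`, because the intervals tile one period. By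
Parseval's identity and `(u‴)^(m) = (2πim)³ û(m)`, one has `‖u‴‖₀ ≤ (2π)³ ‖u‖₃`.
-/

lemma periodic_iteratedDeriv {𝕜 F : Type*} [NontriviallyNormedField 𝕜] [NormedAddCommGroup F]
    [NormedSpace 𝕜 F] {f : 𝕜 → F} {c : 𝕜} (hf : Function.Periodic f c) (n : ℕ) :
    Function.Periodic (iteratedDeriv n f) c := fun x => by
  rw [← congrFun (iteratedDeriv_comp_add_const n f c) x, funext hf]

section FourierCoefficients

lemma fc_eq_fourierCoeffOn (f : ℝ → ℂ) (m : ℤ) : fc f m = fourierCoeffOn zero_lt_one f m := by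
  rw [fourierCoeffOn_eq_integral, fc]
  simp only [fourier_coe_apply, sub_zero, div_one, one_smul, smul_eq_mul, Complex.ofReal_one]
  refine integral_congr fun t _ => ?_
  push_cast
  ring_nf

lemma hasSum_sq_fc {f : ℝ → ℂ} (hf : MemLp f 2 (volume.restrict (Set.Ioc 0 1))) :
    HasSum (fun m => ‖fc f m‖ ^ 2) (∫ t in (0 : ℝ)..1, ‖f t‖ ^ 2) := by
  simpa [fc_eq_fourierCoeffOn] using hasSum_sq_fourierCoeffOn zero_lt_one hf

lemma fc_of_hasDerivAt {f f' : ℝ → ℂ} (hf : ∀ x ∈ Set.uIcc 0 1, HasDerivAt f (f' x) x)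
    (hf' : IntervalIntegrable f' volume 0 1) (hper : f 1 = f 0) (m : ℤ) :
    fc f' m = 2 * Real.pi * Complex.I * m * fc f m := by
  rcases eq_or_ne m 0 with rfl | hm
  · simp [fc, integral_eq_sub_of_hasDerivAt hf hf', hper]
  · have hparts := fourierCoeffOn_of_hasDerivAt zero_lt_one hm hf hf'
    have hπ : (Real.pi : ℂ) ≠ 0 := Complex.ofReal_ne_zero.2 Real.pi_ne_zero
    have hm' : (m : ℂ) ≠ 0 := Int.cast_ne_zero.2 hm
    rw [fc_eq_fourierCoeffOn, fc_eq_fourierCoeffOn, hparts, hper]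
    field_simp
    simp

lemma fc_iteratedDeriv {u : ℝ → ℂ} {n : ℕ} (hu : ContDiff ℝ n u) (hper : Function.Periodic u 1)
    (m : ℤ) : fc (iteratedDeriv n u) m = (2 * Real.pi * Complex.I * m) ^ n * fc u m := by
  induction n with
  | zero => simp
  | succ n ih =>
    have hderiv (x : ℝ) : HasDerivAt (iteratedDeriv n u) (iteratedDeriv (n + 1) u x) x := by
      rw [iteratedDeriv_succ]
      exact (hu.differentiable_iteratedDeriv' n x).hasDerivAt
    have hcont : Continuous (iteratedDeriv (n + 1) u) := hu.continuous_iteratedDeriv' _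
    rw [fc_of_hasDerivAt (fun x _ => hderiv x) (hcont.intervalIntegrable _ _)
      (by simpa using periodic_iteratedDeriv hper n 0), ih (hu.of_le (by norm_cast; omega))]
    ring

lemma sqrt_integral_sq_norm_iteratedDeriv_le_sobNorm {u : ℝ → ℂ} {n : ℕ} (hu : ContDiff ℝ n u)
    (hper : Function.Periodic u 1) :
    √(∫ t in (0 : ℝ)..1, ‖iteratedDeriv n u t‖ ^ 2) ≤ (2 * Real.pi) ^ n * sobNorm n u := by
  have hcont : Continuous (iteratedDeriv n u) := hu.continuous_iteratedDeriv' n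
  have hL2 : MemLp (iteratedDeriv n u) 2 (volume.restrict (Set.Ioc 0 1)) :=
    (memLp_two_iff_integrable_sq_norm hcont.aestronglyMeasurable).2
      ((hcont.norm.pow 2).intervalIntegrable 0 1).1
  have hcoeff (m : ℤ) : ‖fc (iteratedDeriv n u) m‖ ^ 2 =
      ((2 * Real.pi) ^ n) ^ 2 * (|(m : ℝ)| ^ (2 * n) * ‖fc u m‖ ^ 2) := by
    rw [fc_iteratedDeriv hu hper]
    simp only [norm_mul, norm_pow, Complex.norm_I, Complex.norm_real, Complex.norm_intCast,
      Complex.norm_ofNat, Real.norm_of_nonneg Real.pi_pos.le]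
    ring
  have hparseval := hasSum_sq_fc hL2
  simp only [hcoeff] at hparseval
  have hsummable : Summable fun m : ℤ => |(m : ℝ)| ^ (2 * n) * ‖fc u m‖ ^ 2 :=
    (summable_mul_left_iff (by positivity)).1 hparseval.summable
  rw [← hparseval.tsum_eq, tsum_mul_left, Real.sqrt_mul (by positivity),
    Real.sqrt_sq (by positivity), sobNorm, hsummable.tsum_eq_add_tsum_ite 0]
  have hrpow (m : ℤ) : |(m : ℝ)| ^ (2 * (n : ℝ)) = |(m : ℝ)| ^ (2 * n) := mod_cast
    Real.rpow_natCast |(m : ℝ)| (2 * n)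
  simp only [hrpow]
  gcongr
  exact mul_le_of_le_one_left (by positivity) (pow_le_one₀ (by simp) (by simp))

end FourierCoefficients

lemma sq_integral_le_mul_integral_sq {f : ℝ → ℝ} {a b : ℝ} (hab : a ≤ b)
    (hf : IntervalIntegrable f volume a b)
    (hf_sq : IntervalIntegrable (fun t => f t ^ 2) volume a b) :
    (∫ t in a..b, f t) ^ 2 ≤ (b - a) * ∫ t in a..b, f t ^ 2 := by
  rcases hab.eq_or_lt with rfl | hlt
  · simp
  have hba : b - a ≠ 0 := (sub_pos.2 hlt).ne'
  have hjensen : (⨍ t in a..b, f t) ^ 2 ≤ ⨍ t in a..b, f t ^ 2 :=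
    even_two.convexOn_pow.map_set_average_le (by fun_prop) isClosed_univ
      (by simp [Set.uIoc_of_le hab, hlt]) (by simp [Set.uIoc_of_le hab]) (by simp)
      hf.def' hf_sq.def'
  rw [interval_average_eq_div, interval_average_eq_div] at hjensen
  calc (∫ t in a..b, f t) ^ 2 = (b - a) ^ 2 * ((∫ t in a..b, f t) / (b - a)) ^ 2 := by
        field_simp [hba]
    _ ≤ (b - a) ^ 2 * ((∫ t in a..b, f t ^ 2) / (b - a)) := by gcongr
    _ = (b - a) * ∫ t in a..b, f t ^ 2 := by field_simp [hba]

section TaylorRemainder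

variable {E : Type*} [NormedAddCommGroup E] [NormedSpace ℝ E] [CompleteSpace E]

lemma sub_taylorWithinEval_univ_eq_integral {f : ℝ → E} {n : ℕ}
    (hf : ContDiff ℝ (n + 1 : ℕ) f) (c x : ℝ) :
    f x - taylorWithinEval f n Set.univ c x =
      ∫ t in c..x, ((x - t) ^ n / n !) • iteratedDeriv (n + 1) f t := by
  rcases eq_or_ne c x with rfl | hne
  · simp
  have hwithin {k : ℕ} (hk : k ≤ n + 1) {t : ℝ} (ht : t ∈ Set.uIcc c x) :
      iteratedDerivWithin k f (Set.uIcc c x) t = iteratedDeriv k f t :=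
    iteratedDerivWithin_eq_iteratedDeriv (uniqueDiffOn_uIcc hne)
      (hf.of_le (by norm_cast)).contDiffAt ht
  have htaylor : taylorWithinEval f n Set.univ c x = taylorWithinEval f n (Set.uIcc c x) c x := by
    rw [taylor_within_apply, taylor_within_apply]
    refine Finset.sum_congr rfl fun k hk => ?_
    rw [hwithin (Finset.mem_range.1 hk).le Set.left_mem_uIcc, iteratedDerivWithin_univ]
  rw [htaylor, taylor_integral_remainder hf.contDiffOn]
  exact integral_congr fun t ht => by simp only [hwithin le_rfl ht]

lemma norm_sub_taylorWithinEval_univ_le {f : ℝ → E} {n : ℕ} (hf : ContDiff ℝ (n + 1 : ℕ) f)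
    {a b c x : ℝ} (hc : c ∈ Set.Icc a b) (hx : x ∈ Set.Icc a b) :
    ‖f x - taylorWithinEval f n Set.univ c x‖ ≤
      |x - c| ^ n / n ! * ∫ t in a..b, ‖iteratedDeriv (n + 1) f t‖ := by
  have hcont : Continuous (iteratedDeriv (n + 1) f) := hf.continuous_iteratedDeriv' _
  have hsub : Set.uIoc c x ⊆ Set.uIoc a b := by
    rw [Set.uIoc_of_le (hc.1.trans hc.2)]
    exact Set.Ioc_subset_Ioc (le_min hc.1 hx.1) (max_le hc.2 hx.2)
  calc ‖f x - taylorWithinEval f n Set.univ c x‖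
      = ‖∫ t in c..x, ((x - t) ^ n / n !) • iteratedDeriv (n + 1) f t‖ := by
        rw [sub_taylorWithinEval_univ_eq_integral hf]
    _ ≤ |∫ t in c..x, |x - c| ^ n / n ! * ‖iteratedDeriv (n + 1) f t‖| := by
        refine norm_integral_le_abs_of_norm_le (ae_restrict_of_forall_mem measurableSet_uIoc
          fun t ht => ?_) (Continuous.intervalIntegrable (by fun_prop) _ _)
        rw [norm_smul, norm_div, norm_pow, Real.norm_eq_abs, RCLike.norm_natCast]
        gcongr ?_ ^ n / _ * _
        exact Set.abs_sub_right_of_mem_uIcc (Set.uIoc_subset_uIcc ht)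
    _ = |x - c| ^ n / n ! * |∫ t in c..x, ‖iteratedDeriv (n + 1) f t‖| := by
        rw [intervalIntegral.integral_const_mul, abs_mul, abs_of_nonneg (by positivity)]
    _ ≤ |x - c| ^ n / n ! * |∫ t in a..b, ‖iteratedDeriv (n + 1) f t‖| := by
        refine mul_le_mul_of_nonneg_left (abs_integral_mono_interval hsub
          (ae_of_all _ fun _ => norm_nonneg _) (hcont.norm.intervalIntegrable _ _)) (by positivity)
    _ = |x - c| ^ n / n ! * ∫ t in a..b, ‖iteratedDeriv (n + 1) f t‖ := by
        rw [abs_of_nonneg (integral_nonneg (hc.1.trans hc.2) fun _ _ => norm_nonneg _)]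

lemma integral_taylorWithinEval_two (f : ℝ → E) (c h : ℝ) :
    ∫ t in (c - h / 2)..(c + h / 2), taylorWithinEval f 2 Set.univ c t =
      h • f c + (h ^ 3 / 24) • iteratedDeriv 2 f c := by
  have hlin : ∫ t in (c - h / 2)..(c + h / 2), (t - c) = 0 := by
    simp [integral_comp_sub_right (fun t => t)]
  have hquad : ∫ t in (c - h / 2)..(c + h / 2), 2⁻¹ * (t - c) ^ 2 = h ^ 3 / 24 := by
    rw [intervalIntegral.integral_const_mul, integral_comp_sub_right (fun t => t ^ 2), integral_pow]
    ring
  have htaylor (t : ℝ) : taylorWithinEval f 2 Set.univ c t =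
      f c + (t - c) • iteratedDeriv 1 f c + (2⁻¹ * (t - c) ^ 2) • iteratedDeriv 2 f c := by
    norm_num [taylorWithinEval_succ, iteratedDerivWithin_univ]
  simp only [htaylor]
  rw [integral_add (Continuous.intervalIntegrable (by fun_prop) _ _)
      (Continuous.intervalIntegrable (by fun_prop) _ _),
    integral_add (Continuous.intervalIntegrable (by fun_prop) _ _)
      (Continuous.intervalIntegrable (by fun_prop) _ _),
    intervalIntegral.integral_const, intervalIntegral.integral_smul_const, hlin,
    intervalIntegral.integral_smul_const, hquad]
  simp

end TaylorRemainder

section CorrectedMidpointRule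

variable {E : Type*} [NormedAddCommGroup E] [NormedSpace ℝ E]

/-- The error of the midpoint rule with second-derivative correction on the interval of length `h`
centred at `c`. -/
noncomputable def correctedMidpointError (u : ℝ → E) (c h : ℝ) : E :=
  h • u c + (h ^ 3 / 24) • iteratedDeriv 2 u c - ∫ t in (c - h / 2)..(c + h / 2), u t

variable [CompleteSpace E] {u : ℝ → E} {h : ℝ}

lemma norm_correctedMidpointError_le (hu : ContDiff ℝ 3 u) (c : ℝ) (hh : 0 ≤ h) :
    ‖correctedMidpointError u c h‖ ≤
      h ^ 3 / 8 * ∫ t in (c - h / 2)..(c + h / 2), ‖iteratedDeriv 3 u t‖ := by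
  have hc : c ∈ Set.Icc (c - h / 2) (c + h / 2) := by constructor <;> linarith
  set M := ∫ t in (c - h / 2)..(c + h / 2), ‖iteratedDeriv 3 u t‖
  have hM : 0 ≤ M := integral_nonneg (hc.1.trans hc.2) fun _ _ => norm_nonneg _
  have hremainder : ∀ t ∈ Set.uIoc (c - h / 2) (c + h / 2),
      ‖u t - taylorWithinEval u 2 Set.univ c t‖ ≤ (h / 2) ^ 2 / 2 * M := fun t ht => by
    rw [Set.uIoc_of_le (hc.1.trans hc.2)] at ht
    have htc : |t - c| ≤ h / 2 := abs_le.2 ⟨by linarith [ht.1], by linarith [ht.2]⟩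
    calc ‖u t - taylorWithinEval u 2 Set.univ c t‖ ≤ |t - c| ^ 2 / 2 ! * M :=
          norm_sub_taylorWithinEval_univ_le hu hc (Set.Ioc_subset_Icc_self ht)
      _ ≤ (h / 2) ^ 2 / 2 * M := by rw [Nat.factorial_two, Nat.cast_two]; gcongr
  have htaylor_cont : Continuous fun t => taylorWithinEval u 2 Set.univ c t := by
    simp only [taylor_within_apply]
    fun_prop
  rw [correctedMidpointError, ← integral_taylorWithinEval_two, norm_sub_rev,
    ← integral_sub (hu.continuous.intervalIntegrable _ _) (htaylor_cont.intervalIntegrable _ _)]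
  calc _ ≤ (h / 2) ^ 2 / 2 * M * |c + h / 2 - (c - h / 2)| :=
        norm_integral_le_of_norm_le_const hremainder
    _ = h ^ 3 / 8 * M := by rw [abs_of_nonneg (by linarith)]; ring

lemma sq_norm_correctedMidpointError_le (hu : ContDiff ℝ 3 u) (c : ℝ) (hh : 0 ≤ h) :
    ‖correctedMidpointError u c h‖ ^ 2 ≤
      (h ^ 3 / 8) ^ 2 * (h * ∫ t in (c - h / 2)..(c + h / 2), ‖iteratedDeriv 3 u t‖ ^ 2) := by
  have hcont : Continuous (iteratedDeriv 3 u) := hu.continuous_iteratedDeriv' 3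
  calc ‖correctedMidpointError u c h‖ ^ 2
      ≤ (h ^ 3 / 8 * ∫ t in (c - h / 2)..(c + h / 2), ‖iteratedDeriv 3 u t‖) ^ 2 := by
        gcongr
        exact norm_correctedMidpointError_le hu c hh
    _ = (h ^ 3 / 8) ^ 2 * (∫ t in (c - h / 2)..(c + h / 2), ‖iteratedDeriv 3 u t‖) ^ 2 :=
        mul_pow _ _ _
    _ ≤ (h ^ 3 / 8) ^ 2 * ((c + h / 2 - (c - h / 2)) *
          ∫ t in (c - h / 2)..(c + h / 2), ‖iteratedDeriv 3 u t‖ ^ 2) := by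
        gcongr
        exact sq_integral_le_mul_integral_sq (by linarith) (hcont.norm.intervalIntegrable _ _)
          ((hcont.norm.pow 2).intervalIntegrable _ _)
    _ = _ := by ring_nf

lemma norm_sum_smul_correctedMidpointError_le {ι 𝕜 : Type*} [NormedField 𝕜] [NormedSpace 𝕜 E]
    (hu : ContDiff ℝ 3 u) (hh : 0 ≤ h) (s : Finset ι) (ψ : ι → 𝕜) (c : ι → ℝ) :
    ‖∑ j ∈ s, ψ j • correctedMidpointError u (c j) h‖ ≤ h ^ 3 / 8 * √(h * ∑ j ∈ s, ‖ψ j‖ ^ 2) *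
      √(∑ j ∈ s, ∫ t in (c j - h / 2)..(c j + h / 2), ‖iteratedDeriv 3 u t‖ ^ 2) := by
  set J : ι → ℝ := fun j => ∫ t in (c j - h / 2)..(c j + h / 2), ‖iteratedDeriv 3 u t‖ ^ 2
  calc ‖∑ j ∈ s, ψ j • correctedMidpointError u (c j) h‖
      ≤ ∑ j ∈ s, ‖ψ j‖ * ‖correctedMidpointError u (c j) h‖ :=
        norm_sum_le_of_le s fun j _ => (norm_smul _ _).le
    _ ≤ √(∑ j ∈ s, ‖ψ j‖ ^ 2) * √(∑ j ∈ s, ‖correctedMidpointError u (c j) h‖ ^ 2) :=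
        Real.sum_mul_le_sqrt_mul_sqrt _ _ _
    _ ≤ √(∑ j ∈ s, ‖ψ j‖ ^ 2) * √((h ^ 3 / 8) ^ 2 * (h * ∑ j ∈ s, J j)) := by
        simp only [Finset.mul_sum]
        gcongr with j
        exact sq_norm_correctedMidpointError_le hu (c j) hh
    _ = h ^ 3 / 8 * √(h * ∑ j ∈ s, ‖ψ j‖ ^ 2) * √(∑ j ∈ s, J j) := by
        rw [Real.sqrt_mul (by positivity), Real.sqrt_sq (by positivity), Real.sqrt_mul hh,
          Real.sqrt_mul hh]
        ring

end CorrectedMidpointRule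

section Grid

lemma tg_sub_half (h ε : ℝ) (j : ℤ) : tg h ε j - h / 2 = sg h ε j := by
  rw [tg, sg]
  ring

lemma tg_add_half (h ε : ℝ) (j : ℤ) : tg h ε j + h / 2 = sg h ε (j + 1) := by
  rw [tg, sg]
  push_cast
  ring

lemma sum_zmod_val {M : Type*} [AddCommMonoid M] (N : ℕ) [NeZero N] (F : ℕ → M) :
    ∑ j : ZMod N, F j.val = ∑ k ∈ Finset.range N, F k := by
  obtain ⟨n, rfl⟩ := Nat.exists_eq_succ_of_ne_zero (NeZero.ne N)
  exact Fin.sum_univ_eq_sum_range F (n + 1)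

lemma sum_integral_grid_eq_integral_period {E : Type*} [NormedAddCommGroup E] [NormedSpace ℝ E]
    {g : ℝ → E} {T h : ℝ} {N : ℕ} (hper : Function.Periodic g T)
    (hg : ∀ a b, IntervalIntegrable g volume a b) (hT : N * h = T) (ε : ℝ) :
    ∑ k ∈ Finset.range N, ∫ t in (tg h ε k - h / 2)..(tg h ε k + h / 2), g t =
      ∫ t in (0 : ℝ)..T, g t := by
  simp only [tg_sub_half, tg_add_half]
  have htile := sum_integral_adjacent_intervals (a := fun k : ℕ => sg h ε k) (n := N)
    fun k _ => hg (sg h ε k) (sg h ε (k + 1 : ℕ))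
  push_cast at htile
  have hend : sg h ε N = sg h ε 0 + T := by
    rw [← hT, sg, sg]
    push_cast
    ring
  rw [htile, hend, hper.intervalIntegral_add_eq _ 0, zero_add]

end Grid

/-- corrected midpoint quadrature tested against a step function:
`|Σ_j ψ_j ( h u(t_{j+ε}) + (h³/24) u″(t_{j+ε}) − ∫ u )| ≤ C h³ ‖ψ_h‖₀ ‖u‖₃`
with an absolute constant `C`. -/
theorem stmt_19 :
    ∃ C > (0:ℝ), ∀ (ε : ℝ) (N : ℕ) [NeZero N], ∀ ψ : ZMod N → ℂ,
      ∀ u : ℝ → ℂ, ContDiff ℝ 3 u → Function.Periodic u 1 →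
        ‖∑ j : ZMod N, ψ j *
            ((1 / (N : ℂ)) * u (tg (1 / (N : ℝ)) ε ((j.val : ℕ) : ℤ))
              + (1 / (N : ℂ)) ^ 3 / 24 * deriv (deriv u) (tg (1 / (N : ℝ)) ε ((j.val : ℕ) : ℤ))
              - ∫ t in (tg (1 / (N : ℝ)) ε ((j.val : ℕ) : ℤ) - 1 / (2 * (N : ℝ)))..(
                  tg (1 / (N : ℝ)) ε ((j.val : ℕ) : ℤ) + 1 / (2 * (N : ℝ))), u t)‖ ≤
          C * (1 / (N : ℝ)) ^ 3
            * Real.sqrt ((1 / (N : ℝ)) * ∑ j : ZMod N, ‖ψ j‖ ^ 2) * sobNorm 3 u := by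
  refine ⟨Real.pi ^ 3, by positivity, fun ε N _ ψ u hu hper => ?_⟩
  have hcont : Continuous fun t => ‖iteratedDeriv 3 u t‖ ^ 2 :=
    (hu.continuous_iteratedDeriv' 3).norm.pow 2
  set h : ℝ := 1 / N with hdef
  have hN : N * h = 1 := mul_one_div_cancel (Nat.cast_ne_zero.2 (NeZero.ne N))
  have hhalf : 1 / (2 * (N : ℝ)) = h / 2 := by rw [hdef]; ring
  have htile : ∑ j : ZMod N, ∫ t in (tg h ε (j.val : ℤ) - h / 2)..(tg h ε (j.val : ℤ) + h / 2),
      ‖iteratedDeriv 3 u t‖ ^ 2 = ∫ t in (0 : ℝ)..1, ‖iteratedDeriv 3 u t‖ ^ 2 := by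
    rw [sum_zmod_val N fun k => ∫ t in (tg h ε k - h / 2)..(tg h ε k + h / 2),
      ‖iteratedDeriv 3 u t‖ ^ 2]
    exact sum_integral_grid_eq_integral_period
      ((periodic_iteratedDeriv hper 3).comp fun z => ‖z‖ ^ 2)
      hcont.intervalIntegrable hN ε
  calc _ = ‖∑ j : ZMod N, ψ j • correctedMidpointError u (tg h ε (j.val : ℤ)) h‖ := by
        simp [correctedMidpointError, iteratedDeriv_succ, hhalf, hdef]
    _ ≤ h ^ 3 / 8 * √(h * ∑ j, ‖ψ j‖ ^ 2) * √(∫ t in (0 : ℝ)..1, ‖iteratedDeriv 3 u t‖ ^ 2) :=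
        htile ▸ norm_sum_smul_correctedMidpointError_le hu (by positivity) _ ψ _
    _ ≤ h ^ 3 / 8 * √(h * ∑ j, ‖ψ j‖ ^ 2) * ((2 * Real.pi) ^ 3 * sobNorm 3 u) := by
        gcongr
        exact sqrt_integral_sq_norm_iteratedDeriv_le_sobNorm hu hper
    _ = _ := by ring
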